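/- arXiv:2307.10964 — 2 statements merged into one kernel-verified Lean document; each statement's English description precedes it below -/
import Mathlib

section
/- Let G be a countable group acting by graph automorphisms on a countable tree T, and suppose that every infinite geodesic 𝐯 in T has a finite initial segment σ with Stab_G(σ) = Stab_G(𝐯). Then the orbit equivalence relation E_G^{∂T} of the induced action of G on the Gromov boundary ∂T is Borel hyperfinite. -/
open MeasureTheory Function Filter

/-! ### Countable Borel equivalence relations -/

section CBER

variable {X Y : Type*} [MeasurableSpace X] [MeasurableSpace Y]

/-- A countable Borel equivalence relation on a standard Borel space. -/
def IsCBER (E : X → X → Prop) : Prop :=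
  Equivalence E ∧ MeasurableSet {p : X × X | E p.1 p.2} ∧ ∀ x : X, {y | E x y}.Countable

/-- `B` meets every `E`-class in exactly one point. -/
def IsTransversal (E : X → X → Prop) (B : Set X) : Prop :=
  ∀ x : X, ∃! y : X, y ∈ B ∧ E x y

/-- A CBER is smooth if it admits a Borel transversal. -/
def SmoothRel (E : X → X → Prop) : Prop :=
  ∃ B : Set X, MeasurableSet B ∧ IsTransversal E B

/-- A Borel equivalence relation all of whose classes are finite. -/
def IsFiniteBorelEquivalence (E : X → X → Prop) : Prop :=
  Equivalence E ∧ MeasurableSet {p : X × X | E p.1 p.2} ∧ ∀ x : X, {y | E x y}.Finite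

/-- A CBER is (Borel) hyperfinite if it is the increasing union of a sequence of
Borel equivalence relations with finite classes. -/
def Hyperfinite (E : X → X → Prop) : Prop :=
  ∃ F : ℕ → X → X → Prop,
    (∀ i, IsFiniteBorelEquivalence (F i)) ∧
    (∀ i x y, F i x y → F (i + 1) x y) ∧
    (∀ x y, E x y ↔ ∃ i, F i x y)

/-- Borel reducibility of equivalence relations. -/
def BorelReducible (E : X → X → Prop) (F : Y → Y → Prop) : Prop :=
  ∃ f : X → Y, Measurable f ∧ ∀ x x' : X, E x x' ↔ F (f x) (f x')

/-- Borel bireducibility of equivalence relations. -/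
def BorelBireducible (E : X → X → Prop) (F : Y → Y → Prop) : Prop :=
  BorelReducible E F ∧ BorelReducible F E

/-- The saturation `[A]_E` of a set `A`: the smallest `E`-invariant set containing `A`. -/
def Saturation (E : X → X → Prop) (A : Set X) : Set X :=
  {x : X | ∃ a ∈ A, E x a}

end CBER

/-! ### ℓ¹ machinery, amenability of CBERs -/

section Amen

variable {X : Type*} [MeasurableSpace X]

/-- ℓ¹ distance between two summable functions. -/
noncomputable def l1dist {A : Type*} (p q : A → ℝ) : ℝ :=
  ∑' a : A, |p a - q a|

/-- `p` is a probability measure concentrated on the `E`-class of `x`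
(identified with its density). -/
def IsProbOnClass (E : X → X → Prop) (p : X → ℝ) (x : X) : Prop :=
  (∀ y, 0 ≤ p y) ∧ (∀ y, p y ≠ 0 → E x y) ∧ HasSum p 1

/-- A CBER is Borel amenable if there is a sequence of Borel assignments of probability
measures on the classes which are asymptotically invariant. -/
def BorelAmenable (E : X → X → Prop) : Prop :=
  ∃ p : ℕ → X → X → ℝ,
    (∀ i x, IsProbOnClass E (p i x) x) ∧
    (∀ i, Measurable fun q : X × X => p i q.1 q.2) ∧
    (∀ x y, E x y → ∀ ε : ℝ, 0 < ε → ∀ᶠ i in atTop, l1dist (p i x) (p i y) < ε)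

/-- A CBER is Borel 2-amenable if there is a double sequence of Borel assignments of
probability measures on the classes which are asymptotically invariant in the
iterated-limit sense. -/
def Borel2Amenable (E : X → X → Prop) : Prop :=
  ∃ p : ℕ → ℕ → X → X → ℝ,
    (∀ i j x, IsProbOnClass E (p i j x) x) ∧
    (∀ i j, Measurable fun q : X × X => p i j q.1 q.2) ∧
    (∀ x y, E x y → ∀ ε : ℝ, 0 < ε →
      ∀ᶠ i in atTop, ∀ᶠ j in atTop, l1dist (p i j x) (p i j y) < ε)

/-- `E` is μ-hyperfinite: hyperfinite off a μ-null set. -/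
def MuHyperfinite (E : X → X → Prop) (μ : Measure X) : Prop :=
  ∃ A : Set X, MeasurableSet A ∧ μ Aᶜ = 0 ∧ Hyperfinite (fun a b : A => E a b)

/-- `E` is μ-amenable: Borel amenable off a μ-null set. -/
def MuAmenable (E : X → X → Prop) (μ : Measure X) : Prop :=
  ∃ A : Set X, MeasurableSet A ∧ μ Aᶜ = 0 ∧ BorelAmenable (fun a b : A => E a b)

/-- `E` is μ-2-amenable: Borel 2-amenable off a μ-null set. -/
def Mu2Amenable (E : X → X → Prop) (μ : Measure X) : Prop :=
  ∃ A : Set X, MeasurableSet A ∧ μ Aᶜ = 0 ∧ Borel2Amenable (fun a b : A => E a b)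

/-- `E` is measure-hyperfinite: μ-hyperfinite for every Borel probability measure μ. -/
def MeasureHyperfinite (E : X → X → Prop) : Prop :=
  ∀ μ : Measure X, IsProbabilityMeasure μ → MuHyperfinite E μ

end Amen

/-! ### Reiter functions and uniform coamenability -/

section Reiter

/-- A (finitely or infinitely supported) probability function on a countable set. -/
def IsProbFun {A : Type*} (p : A → ℝ) : Prop :=
  (∀ a, 0 ≤ p a) ∧ HasSum p 1

/-- The pushforward of `p : Prob(G)` under the orbit map `g ↦ g • x`. -/
noncomputable def pushMeasure {G X : Type*} [Group G] [MulAction G X]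
    (p : G → ℝ) (x : X) : X → ℝ :=
  fun y => ∑' g : {g : G // g • x = y}, p g.1

/-- `p` is an `(S, ε)`-Reiter function for the action `G ↷ X`. -/
def IsReiterFun {G : Type*} (X : Type*) [Group G] [MulAction G X]
    (S : Finset G) (ε : ℝ) (p : G → ℝ) : Prop :=
  IsProbFun p ∧ ∀ s ∈ S, ∀ x : X, l1dist (pushMeasure p x) (pushMeasure p (s • x)) < ε

/-- A subgroup `H ≤ G` is uniformly coamenable if the action `G ↷ G/H` admits
`(S, ε)`-Reiter functions for all finite `S ⊆ G` and all `ε > 0`. -/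
def UniformlyCoamenable {G : Type*} [Group G] (H : Subgroup G) : Prop :=
  ∀ (S : Finset G) (ε : ℝ), 0 < ε → ∃ p : G → ℝ, IsReiterFun (G ⧸ H) S ε p

/-- The Reiter criterion for amenability of a countable group `Q`. -/
def ReiterAmenable (Q : Type*) [Group Q] : Prop :=
  ∀ (S : Finset Q) (ε : ℝ), 0 < ε → ∃ q : Q → ℝ, IsProbFun q ∧
    ∀ s ∈ S, l1dist q (fun x => q (s⁻¹ * x)) < ε

end Reiter

/-! ### Trees, geodesics and the Gromov boundary -/

section Tree

variable {V : Type*} (T : SimpleGraph V)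

/-- The space of infinite geodesics in the graph `T`. -/
def Geo : Set (ℕ → V) :=
  {v | Function.Injective v ∧ ∀ n, T.Adj (v n) (v (n + 1))}

/-- The shift map (the action of the generator of the monoid ℕ) on `Geo T`. -/
def geoShift (v : Geo T) : Geo T :=
  ⟨fun n => v.1 (n + 1),
   fun a b h => by have := v.2.1 h; omega,
   fun n => v.2.2 (n + 1)⟩

/-- Tail equivalence: the orbit equivalence relation of the shift action of the
monoid ℕ on `Geo T`, i.e. the equivalence relation generated by `v ∼ m • v`. -/
def tailRel : Geo T → Geo T → Prop :=
  Relation.EqvGen fun a b => ∃ m : ℕ, b = (geoShift T)^[m] a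

def tailSetoid : Setoid (Geo T) :=
  ⟨tailRel T, Relation.EqvGen.is_equivalence _⟩

/-- The Gromov boundary `∂T = Geo(T)/ℕ`. -/
def Bdry : Type _ := Quotient (tailSetoid T)

instance [MeasurableSpace V] : MeasurableSpace (Bdry T) :=
  inferInstanceAs (MeasurableSpace (Quotient (tailSetoid T)))

variable {G : Type*} [Group G] [MulAction G V]

/-- The action `G ↷ V` is by graph automorphisms of `T`. -/
def IsGraphAction (G : Type*) [Group G] [MulAction G V] : Prop :=
  ∀ (g : G) (v w : V), T.Adj v w ↔ T.Adj (g • v) (g • w)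

variable {T}

/-- The coordinatewise action of `G` on `Geo T`. -/
def geoSmul (h : IsGraphAction T G) (g : G) (v : Geo T) : Geo T :=
  ⟨fun n => g • v.1 n, (MulAction.injective g).comp v.2.1,
   fun n => (h g _ _).mp (v.2.2 n)⟩

lemma geoShift_geoSmul (h : IsGraphAction T G) (g : G) (v : Geo T) :
    geoShift T (geoSmul h g v) = geoSmul h g (geoShift T v) := rfl

lemma iterate_geoShift_geoSmul (h : IsGraphAction T G) (g : G) (m : ℕ) (v : Geo T) :
    (geoShift T)^[m] (geoSmul h g v) = geoSmul h g ((geoShift T)^[m] v) := by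
  induction m generalizing v with
  | zero => rfl
  | succ m ih =>
      rw [Function.iterate_succ_apply, Function.iterate_succ_apply,
        geoShift_geoSmul, ih]

lemma tailRel_geoSmul (h : IsGraphAction T G) (g : G) {v w : Geo T}
    (hvw : tailRel T v w) : tailRel T (geoSmul h g v) (geoSmul h g w) := by
  induction hvw with
  | rel a b hab =>
      obtain ⟨m, rfl⟩ := hab
      exact Relation.EqvGen.rel _ _ ⟨m, (iterate_geoShift_geoSmul h g m a).symm⟩
  | refl a => exact Relation.EqvGen.refl _
  | symm a b _ ih => exact Relation.EqvGen.symm _ _ ih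
  | trans a b c _ _ ih1 ih2 => exact Relation.EqvGen.trans _ _ _ ih1 ih2

/-- The induced action of `G` on the Gromov boundary `∂T`. -/
def bdrySmul (h : IsGraphAction T G) (g : G) : Bdry T → Bdry T :=
  Quotient.map (geoSmul h g) (fun _ _ hab => tailRel_geoSmul h g hab)

/-- The orbit equivalence relation `E_G^{∂T}` of the boundary action. -/
def bdryRel (h : IsGraphAction T G) : Bdry T → Bdry T → Prop :=
  fun x y => ∃ g : G, bdrySmul h g x = y

/-- The orbit equivalence relation `E_G^{Geo(T)}`. -/
def geoRel (h : IsGraphAction T G) : Geo T → Geo T → Prop :=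
  fun v w => ∃ g : G, geoSmul h g v = w

end Tree

/-! ### Stabilizers of geodesics and of their initial segments -/

section Stab

variable (G : Type*) {V : Type*} [Group G] [MulAction G V]

/-- The (pointwise) stabilizer of an infinite sequence of vertices. -/
def ptwiseStab (v : ℕ → V) : Subgroup G where
  carrier := {g : G | ∀ k : ℕ, g • v k = v k}
  one_mem' := fun k => one_smul _ _
  mul_mem' := fun {a b} ha hb k => by rw [mul_smul, hb k, ha k]
  inv_mem' := fun {a} ha k => inv_smul_eq_iff.mpr (ha k).symm

/-- The stabilizer of the initial segment `(v 0, …, v n)`. -/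
def initStab (v : ℕ → V) (n : ℕ) : Subgroup G where
  carrier := {g : G | ∀ k ≤ n, g • v k = v k}
  one_mem' := fun k _ => one_smul _ _
  mul_mem' := fun {a b} ha hb k hk => by rw [mul_smul, hb k hk, ha k hk]
  inv_mem' := fun {a} ha k hk => inv_smul_eq_iff.mpr (ha k hk).symm

/-- The stabilizer of a finite geodesic given as a tuple of vertices. -/
def finStab {n : ℕ} (f : Fin n → V) : Subgroup G where
  carrier := {g : G | ∀ i : Fin n, g • f i = f i}
  one_mem' := fun i => one_smul _ _
  mul_mem' := fun {a b} ha hb i => by rw [mul_smul, hb i, ha i]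
  inv_mem' := fun {a} ha i => inv_smul_eq_iff.mpr (ha i).symm

end Stab

/-! ### Orbit equivalence relations of monoid actions -/

section MonoidOrbit

/-- The orbit equivalence relation of a monoid action: the equivalence relation
generated by `x ∼ m • x`. -/
def monOrbitRel (M : Type*) {X : Type*} [Monoid M] [MulAction M X] :
    X → X → Prop :=
  Relation.EqvGen fun x y => ∃ m : M, y = m • x

end MonoidOrbit

/-!
In a forest a geodesic is determined by its end and its origin, so tail equivalence has a Borel
transversal and every boundary point `x` has a Borel choice of geodesic `ρ x` towards it. If
stabilizers are attained on finite initial segments, two geodesics in the same `G`-orbit sharing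
such a segment are equal; there are only countably many segments, so the orbit relation on `Geo T`
is smooth too, with a Borel choice `s` of one geodesic per orbit.

Let `u j x` be the end of `s (shift^j (ρ x))`, which lies in the class of `x`. If `x` and `y` are
equivalent, some translate of `ρ x` shares a tail with `ρ y`, so the sequences `u · x` and `u · y`
agree up to a shift. Hence they have the same limit inferior once the boundary is embedded in the
unit interval, and choosing terms ever closer to it yields points `t n x` of the class of `x` with
`t n x = t n y` for large `n`. Recording how to walk back from `t (n + 1) x` to `t n x`, and from
`t 0 x` to `x`, attaches to each point a sequence of natural numbers which determines it within its
class and which eventually agrees for any two points of a class. Coding these numbers by sets, of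
which only finitely many separate two given equivalent points, exhibits the relation as an
increasing union of relations with finite classes.
-/

section Criteria

variable {X : Type*} [MeasurableSpace X] {E : X → X → Prop}

theorem hyperfinite_of_eventually_cofinite_mem_iff {ι : Type*} [Countable ι]
    (hE : Equivalence E) (hEm : MeasurableSet {p : X × X | E p.1 p.2})
    {A : ι → Set X} (hA : ∀ i, MeasurableSet (A i))
    (hcof : ∀ x y, E x y → ∀ᶠ i in cofinite, (x ∈ A i ↔ y ∈ A i))
    (hsep : ∀ x y, E x y → (∀ i, x ∈ A i ↔ y ∈ A i) → x = y) : Hyperfinite E := by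
  obtain ⟨e, he⟩ := exists_injective_nat ι
  refine ⟨fun n x y => E x y ∧ ∀ i, n ≤ e i → (x ∈ A i ↔ y ∈ A i), fun n => ⟨?_, ?_, ?_⟩, ?_, ?_⟩
  · exact ⟨fun x => ⟨hE.refl x, fun _ _ => Iff.rfl⟩,
      fun h => ⟨hE.symm h.1, fun i hi => (h.2 i hi).symm⟩,
      fun h h' => ⟨hE.trans h.1 h'.1, fun i hi => (h.2 i hi).trans (h'.2 i hi)⟩⟩
  · have hm : MeasurableSet {p : X × X | ∀ i, n ≤ e i → (p.1 ∈ A i ↔ p.2 ∈ A i)} := by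
      simp only [Set.ofPred_forall]
      exact .iInter fun i => .iInter fun _ => (measurable_fst (hA i)).iff (measurable_snd (hA i))
    exact hEm.inter hm
  · intro x
    have hfin : {i | e i < n}.Finite := (Set.finite_Iio n).preimage he.injOn
    refine Set.Finite.of_finite_image (f := fun y => {i | e i < n ∧ y ∈ A i})
      (hfin.powerset.subset ?_) ?_
    · rintro _ ⟨y, -, rfl⟩ i hi
      exact hi.1
    · intro y hy z hz hyz
      refine hsep y z (hE.trans (hE.symm hy.1) hz.1) fun i => ?_
      rcases lt_or_ge (e i) n with hi | hi
      · simpa [hi] using Set.ext_iff.1 hyz i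
      · exact (hy.2 i hi).symm.trans (hz.2 i hi)
  · exact fun n x y h => ⟨h.1, fun i hi => h.2 i (n.le_succ.trans hi)⟩
  · refine fun x y => ⟨fun h => ?_, fun ⟨_, h, _⟩ => h⟩
    obtain ⟨M, hM⟩ := ((hcof x y h).image e).bddAbove
    refine ⟨M + 1, h, fun i hi => ?_⟩
    by_contra hne
    exact absurd (hM (Set.mem_image_of_mem e hne)) (by omega)

theorem hyperfinite_of_eventually_eq_code (hE : Equivalence E)
    (hEm : MeasurableSet {p : X × X | E p.1 p.2})
    {c : ℕ → X → ℕ} (hc : ∀ n, Measurable (c n))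
    (hev : ∀ x y, E x y → ∀ᶠ n in atTop, c n x = c n y)
    (hsep : ∀ x y, E x y → (∀ n, c n x = c n y) → x = y) : Hyperfinite E := by
  refine hyperfinite_of_eventually_cofinite_mem_iff hE hEm
    (A := fun p : ℕ × ℕ => {x | c p.1 x = p.2}) (fun p => hc p.1 (measurableSet_singleton p.2))
    (fun x y hxy => ?_) (fun x y hxy h => hsep x y hxy fun n => (h (n, c n y)).2 rfl)
  obtain ⟨N, hN⟩ := eventually_atTop.1 (hev x y hxy)
  have hfin : ((fun i => (i, c i x)) '' Set.Iio N ∪ (fun i => (i, c i y)) '' Set.Iio N).Finite :=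
    ((Set.finite_Iio N).image _).union ((Set.finite_Iio N).image _)
  refine hfin.subset ?_
  rintro ⟨i, j⟩ hij
  have hne : ¬ (c i x = j ↔ c i y = j) := hij
  have hi : i < N := by
    by_contra hi
    exact hne (by rw [hN i (not_lt.1 hi)])
  by_cases hx : c i x = j
  · exact Or.inl ⟨i, hi, congrArg (Prod.mk i) hx⟩
  · have hy : c i y = j := by tauto
    exact Or.inr ⟨i, hi, congrArg (Prod.mk i) hy⟩

theorem exists_measurable_injective_unitInterval (X : Type*) [MeasurableSpace X]
    [MeasurableSpace.CountablySeparated X] :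
    ∃ φ : X → unitInterval, Measurable φ ∧ Injective φ := by
  obtain ⟨f, hf, hfi⟩ := MeasurableSpace.measurable_injection_nat_bool_of_countablySeparated X
  have hφ := measurableEmbedding_sigmoid_comp_embeddingReal (ℕ → Bool)
  exact ⟨_, hφ.measurable.comp hf, hφ.injective.comp hfi⟩

theorem countablySeparated_of_measurable_injective {Y : Type*} [MeasurableSpace Y]
    [MeasurableSpace.CountablySeparated Y] {f : X → Y} (hf : Measurable f) (hfi : Injective f) :
    MeasurableSpace.CountablySeparated X := by
  obtain ⟨S, hS, hSm, hsep⟩ := MeasurableSpace.CountablySeparated.countably_separated (α := Y)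
  refine ⟨(f ⁻¹' ·) '' S, hS.image _, ?_, fun x _ y _ hxy => hfi ?_⟩
  · rintro _ ⟨s, hs, rfl⟩
    exact hf (hSm s hs)
  · exact hsep _ trivial _ trivial fun s hs => hxy _ ⟨s, hs, rfl⟩

theorem measurableEq_of_countablySeparated (X : Type*) [MeasurableSpace X]
    [MeasurableSpace.CountablySeparated X] : MeasurableEq X := by
  obtain ⟨φ, hφ, hφi⟩ := exists_measurable_injective_unitInterval X
  have hdiag : Set.diagonal X = {p | φ p.1 = φ p.2} := by
    ext p
    exact hφi.eq_iff.symm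
  exact ⟨hdiag ▸ measurableSet_eq_fun (hφ.comp measurable_fst) (hφ.comp measurable_snd)⟩

/-- A countable Borel equivalence relation, presented as in the Lusin–Novikov theorem: a sequence
of Borel functions enumerates every class. Carrying the enumeration in the definition makes up for
the absence of that theorem from Mathlib. -/
structure IsEnumeratedCBER (E : X → X → Prop) : Prop where
  equivalence : Equivalence E
  exists_enum : ∃ f : ℕ → X → X, (∀ i, Measurable (f i)) ∧ ∀ x y, E x y ↔ ∃ i, f i x = y

namespace IsEnumeratedCBER

theorem of_countable {ι : Type*} [Countable ι] [Nonempty ι] (hE : Equivalence E)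
    {f : ι → X → X} (hf : ∀ i, Measurable (f i)) (hfE : ∀ x y, E x y ↔ ∃ i, f i x = y) :
    IsEnumeratedCBER E := by
  obtain ⟨e, he⟩ := exists_surjective_nat ι
  exact ⟨hE, f ∘ e, fun i => hf (e i), fun x y => (hfE x y).trans he.exists⟩

theorem of_group_action {G : Type*} [Group G] [Countable G] {f : G → X → X}
    (hf : ∀ g, Measurable (f g)) (hone : ∀ x, f 1 x = x)
    (hmul : ∀ g h x, f (g * h) x = f g (f h x)) :
    IsEnumeratedCBER fun x y => ∃ g, f g x = y := by
  refine of_countable ⟨fun x => ⟨1, hone x⟩, ?_, ?_⟩ hf fun _ _ => Iff.rfl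
  · rintro x _ ⟨g, rfl⟩
    exact ⟨g⁻¹, by rw [← hmul, inv_mul_cancel, hone]⟩
  · rintro x _ _ ⟨g, rfl⟩ ⟨h, rfl⟩
    exact ⟨h * g, hmul h g x⟩

theorem measurableSet [MeasurableSpace.CountablySeparated X] (hE : IsEnumeratedCBER E) :
    MeasurableSet {p : X × X | E p.1 p.2} := by
  have := measurableEq_of_countablySeparated X
  obtain ⟨f, hf, hfE⟩ := hE.exists_enum
  simp only [hfE, Set.ofPred_exists]
  exact .iUnion fun i => measurableSet_eq_fun ((hf i).comp measurable_fst) measurable_snd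

theorem smoothRel_of_code (hE : IsEnumeratedCBER E) {κ : X → ℕ} (hκ : Measurable κ)
    (hκE : ∀ x y, E x y → κ x = κ y → x = y) : SmoothRel E := by
  obtain ⟨f, hf, hfE⟩ := hE.exists_enum
  refine ⟨{x | ∀ i, κ x ≤ κ (f i x)}, ?_, fun x => ?_⟩
  · simp only [Set.ofPred_forall]
    exact .iInter fun i => measurableSet_le hκ (hκ.comp (hf i))
  have hmem : ∀ y, (∀ i, κ y ≤ κ (f i y)) ↔ ∀ z, E y z → κ y ≤ κ z := fun y => by
    simp only [hfE, forall_exists_index, forall_apply_eq_imp_iff]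
  simp only [Set.mem_ofPred_eq, hmem]
  obtain ⟨y, hxy, hy⟩ := exists_minimalFor_of_wellFoundedLT (E x) κ ⟨x, hE.equivalence.refl x⟩
  have hmin : ∀ z, E x z → κ y ≤ κ z := fun z hxz => not_lt.1 fun h => (hy hxz h.le).not_gt h
  refine ⟨y, ⟨fun z hyz => hmin z (hE.equivalence.trans hxy hyz), hxy⟩, fun z ⟨hz, hxz⟩ => ?_⟩
  have hzy : E z y := hE.equivalence.trans (hE.equivalence.symm hxz) hxy
  exact hκE z y hzy ((hz y hzy).antisymm (hmin z hxz))

theorem smoothRel_of_iUnion_eq_univ {ι : Type*} [Countable ι] (hE : IsEnumeratedCBER E)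
    {A : ι → Set X} (hA : ∀ i, MeasurableSet (A i)) (hcover : ⋃ i, A i = Set.univ)
    (hsub : ∀ i, ∀ x ∈ A i, ∀ y ∈ A i, E x y → x = y) : SmoothRel E := by
  classical
  obtain ⟨e, he⟩ := exists_injective_nat ι
  have hcode : ∀ x, ∃ n, ∃ i, e i = n ∧ x ∈ A i := fun x => by
    obtain ⟨i, hi⟩ := Set.mem_iUnion.1 (hcover.symm ▸ Set.mem_univ x)
    exact ⟨e i, i, rfl, hi⟩
  refine hE.smoothRel_of_code (measurable_find hcode fun n => ?_) fun x y hxy hκxy => ?_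
  · simp only [Set.ofPred_exists]
    exact .iUnion fun i => (MeasurableSet.const _).inter (hA i)
  · obtain ⟨i, hix, hi⟩ := Nat.find_spec (hcode x)
    obtain ⟨j, hjy, hj⟩ := Nat.find_spec (hcode y)
    obtain rfl : i = j := he (hix.trans (hκxy.trans hjy.symm))
    exact hsub i x hi y hj hxy

theorem exists_selector (hE : IsEnumeratedCBER E) (hsmooth : SmoothRel E) :
    ∃ s : X → X, Measurable s ∧ (∀ x, E x (s x)) ∧ ∀ x y, E x y → s x = s y := by
  classical
  obtain ⟨B, hB, hBE⟩ := hsmooth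
  obtain ⟨f, hf, hfE⟩ := hE.exists_enum
  have hmeet : ∀ x, ∃ i, f i x ∈ B := fun x => by
    obtain ⟨y, ⟨hyB, hxy⟩, -⟩ := hBE x
    obtain ⟨i, rfl⟩ := (hfE x y).1 hxy
    exact ⟨i, hyB⟩
  have hfind : Measurable fun x => Nat.find (hmeet x) := measurable_find hmeet fun i => hf i hB
  have hrel : ∀ x, E x (f (Nat.find (hmeet x)) x) := fun x => (hfE _ _).2 ⟨_, rfl⟩
  refine ⟨fun x => f (Nat.find (hmeet x)) x, ?_, hrel, fun x y hxy => ?_⟩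
  · exact (measurable_from_prod_countable_right (f := fun p : ℕ × X => f p.1 p.2) hf).comp
      (hfind.prodMk measurable_id)
  · exact (hBE x).unique ⟨Nat.find_spec (hmeet x), hrel x⟩
      ⟨Nat.find_spec (hmeet y), hE.equivalence.trans hxy (hrel y)⟩

theorem exists_measurable_section {r : Setoid X} (hr : IsEnumeratedCBER r)
    (hsmooth : SmoothRel r) :
    ∃ ρ : Quotient r → X, Measurable ρ ∧ ∀ q, Quotient.mk r (ρ q) = q := by
  obtain ⟨s, hs, hrel, hinv⟩ := hr.exists_selector hsmooth
  refine ⟨Quotient.lift s hinv, measurable_from_quotient.2 hs, fun q => ?_⟩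
  induction q using Quotient.inductionOn with
  | h x => exact Quotient.sound (r.symm (hrel x))

theorem hyperfinite_of_eventually_eq_of_zero [MeasurableSpace.CountablySeparated X]
    (hE : IsEnumeratedCBER E) {s : ℕ → X → X} (hs : ∀ n, Measurable (s n))
    (hsE : ∀ n x, E x (s n x)) (hev : ∀ x y, E x y → ∀ᶠ n in atTop, s n x = s n y)
    (hzero : ∀ x, s 0 x = x) : Hyperfinite E := by
  classical
  have := measurableEq_of_countablySeparated X
  obtain ⟨f, hf, hfE⟩ := hE.exists_enum
  have hback : ∀ n x, ∃ i, f i (s (n + 1) x) = s n x := fun n x =>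
    (hfE _ _).1 (hE.equivalence.trans (hE.equivalence.symm (hsE (n + 1) x)) (hsE n x))
  -- The code of `x` records how to walk back from each `s (n + 1) x` to `s n x`.
  let c : ℕ → X → ℕ := fun n x => Nat.find (hback n x)
  have hc : ∀ n x, f (c n x) (s (n + 1) x) = s n x := fun n x => Nat.find_spec (hback n x)
  refine hyperfinite_of_eventually_eq_code hE.equivalence hE.measurableSet (c := c)
    (fun n => measurable_find (hback n) fun i =>
      measurableSet_eq_fun ((hf i).comp (hs (n + 1))) (hs n))
    (fun x y hxy => ?_) (fun x y hxy hcode => ?_)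
  · filter_upwards [hev x y hxy, (tendsto_add_atTop_nat 1).eventually (hev x y hxy)]
      with n hn hn'
    simp only [c, hn, hn']
  · have hdesc : ∀ n, s (n + 1) x = s (n + 1) y → s n x = s n y := fun n h => by
      rw [← hc n x, ← hc n y, hcode n, h]
    have hzero_of_eq : ∀ n, s n x = s n y → s 0 x = s 0 y := fun n => by
      induction n with
      | zero => exact id
      | succ n ih => exact fun h => ih (hdesc n h)
    obtain ⟨N, hN⟩ := (hev x y hxy).exists
    exact hzero x ▸ hzero y ▸ hzero_of_eq N hN

theorem hyperfinite_of_eventually_eq [MeasurableSpace.CountablySeparated X]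
    (hE : IsEnumeratedCBER E) {t : ℕ → X → X} (ht : ∀ n, Measurable (t n))
    (htE : ∀ n x, E x (t n x)) (hev : ∀ x y, E x y → ∀ᶠ n in atTop, t n x = t n y) :
    Hyperfinite E := by
  let s : ℕ → X → X := fun n => n.casesOn id t
  refine hE.hyperfinite_of_eventually_eq_of_zero (s := s)
    (Nat.rec measurable_id fun n _ => ht n)
    (Nat.rec hE.equivalence.refl fun n _ => htE n) (fun x y hxy => ?_) fun _ => rfl
  rw [← map_add_atTop_eq_nat 1, eventually_map]
  exact hev x y hxy

end IsEnumeratedCBER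

end Criteria

section Markers

variable {α : Type*} [CompleteLinearOrder α] [MetricSpace α]

/-- `u j` is a marker of the sequence `u` at scale `1 / (n + 1)`: it is this close to `liminf u`,
and attains it exactly when `u` does so infinitely often. -/
def IsNearLiminf (n : ℕ) (u : ℕ → α) (j : ℕ) : Prop :=
  dist (u j) (liminf u atTop) < 1 / ((n : ℝ) + 1) ∧
    (u j = liminf u atTop ↔ ∃ᶠ i in atTop, u i = liminf u atTop)

theorem isNearLiminf_add (n : ℕ) (u : ℕ → α) (j a : ℕ) :
    IsNearLiminf n (fun i => u (i + a)) j ↔ IsNearLiminf n u (j + a) := by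
  have hfreq : (∃ᶠ i in atTop, u (i + a) = liminf u atTop) ↔
      ∃ᶠ i in atTop, u i = liminf u atTop := by
    rw [← frequently_map (m := (· + a)) (P := fun i => u i = liminf u atTop),
      map_add_atTop_eq_nat]
  rw [IsNearLiminf, IsNearLiminf, liminf_nat_add, hfreq]

theorem measurableSet_isNearLiminf [OrderTopology α] [SecondCountableTopology α]
    [MeasurableSpace α] [BorelSpace α] (n j : ℕ) :
    MeasurableSet {u : ℕ → α | IsNearLiminf n u j} := by
  have hlim : Measurable fun u : ℕ → α => liminf u atTop := Measurable.liminf measurable_pi_apply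
  have heq : ∀ i, MeasurableSet {u : ℕ → α | u i = liminf u atTop} := fun i =>
    measurableSet_eq_fun (measurable_pi_apply i) hlim
  have hfreq : MeasurableSet {u : ℕ → α | ∃ᶠ i in atTop, u i = liminf u atTop} := by
    simp only [frequently_atTop, Set.ofPred_forall, Set.ofPred_exists]
    exact .iInter fun a => .iUnion fun i => (MeasurableSet.const _).inter (heq i)
  exact (measurableSet_lt ((measurable_pi_apply j).dist hlim) measurable_const).inter
    ((heq j).iff hfreq)

variable [OrderTopology α]

theorem exists_isNearLiminf (n : ℕ) (u : ℕ → α) : ∃ j, IsNearLiminf n u j := by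
  by_cases hfreq : ∃ᶠ i in atTop, u i = liminf u atTop
  · obtain ⟨j, hj⟩ := hfreq.exists
    exact ⟨j, by rw [hj, dist_self]; positivity, iff_of_true hj hfreq⟩
  · have hnear : ∃ᶠ i in atTop, dist (u i) (liminf u atTop) < 1 / ((n : ℝ) + 1) :=
      mapClusterPt_iff_frequently.1 MapClusterPt.liminf _ (Metric.ball_mem_nhds _ (by positivity))
    obtain ⟨j, hj, hne⟩ := (hnear.and_eventually (not_frequently.1 hfreq)).exists
    exact ⟨j, hj, iff_of_false hne hfreq⟩

open Classical in
/-- The least index of a marker of `u` at scale `1 / (n + 1)`. -/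
noncomputable def nearLiminfIndex (n : ℕ) (u : ℕ → α) : ℕ := Nat.find (exists_isNearLiminf n u)

theorem isNearLiminf_nearLiminfIndex (n : ℕ) (u : ℕ → α) :
    IsNearLiminf n u (nearLiminfIndex n u) := by
  classical exact Nat.find_spec (exists_isNearLiminf n u)

theorem measurable_nearLiminfIndex [SecondCountableTopology α] [MeasurableSpace α] [BorelSpace α]
    (n : ℕ) : Measurable (nearLiminfIndex n : (ℕ → α) → ℕ) := by
  classical exact measurable_find (exists_isNearLiminf n) (measurableSet_isNearLiminf n)

theorem eventually_le_nearLiminfIndex {u : ℕ → α}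
    (hu : ¬ ∃ᶠ i in atTop, u i = liminf u atTop) (a : ℕ) :
    ∀ᶠ n in atTop, a ≤ nearLiminfIndex n u := by
  classical
  have hnot : ∀ j, ∀ᶠ n in atTop, ¬ IsNearLiminf n u j := fun j => by
    by_cases hj : u j = liminf u atTop
    · exact Eventually.of_forall fun n h => hu (h.2.1 hj)
    · filter_upwards [tendsto_one_div_add_atTop_nhds_zero_nat.eventually_lt_const (dist_pos.2 hj)]
        with n hn h
      exact hn.not_gt h.1
  filter_upwards [(eventually_all_finite (Set.finite_Iio a)).2 fun j _ => hnot j] with n hn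
  exact (Nat.le_find_iff _ _).2 hn

theorem nearLiminfIndex_add {n a : ℕ} {u : ℕ → α} (ha : a ≤ nearLiminfIndex n u) :
    nearLiminfIndex n (fun i => u (i + a)) + a = nearLiminfIndex n u := by
  classical
  have hex : ∃ j, IsNearLiminf n u (j + a) := by
    simpa only [isNearLiminf_add] using exists_isNearLiminf n fun i => u (i + a)
  have hfind : nearLiminfIndex n (fun i => u (i + a)) = Nat.find hex :=
    Nat.find_congr' (isNearLiminf_add n u _ a)
  exact hfind ▸ Nat.find_add ha

theorem eventually_apply_nearLiminfIndex_add (u : ℕ → α) (a : ℕ) :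
    ∀ᶠ n in atTop, u (nearLiminfIndex n (fun i => u (i + a)) + a) = u (nearLiminfIndex n u) := by
  by_cases hu : ∃ᶠ i in atTop, u i = liminf u atTop
  · refine Eventually.of_forall fun n => ?_
    have hshift := (isNearLiminf_add n u _ a).1 (isNearLiminf_nearLiminfIndex n _)
    exact (hshift.2.2 hu).trans ((isNearLiminf_nearLiminfIndex n u).2.2 hu).symm
  · filter_upwards [eventually_le_nearLiminfIndex hu a] with n hn
    rw [nearLiminfIndex_add hn]

theorem eventually_apply_nearLiminfIndex_eq {u v : ℕ → α} {a b : ℕ}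
    (huv : ∀ j, u (j + a) = v (j + b)) :
    ∀ᶠ n in atTop, u (nearLiminfIndex n u) = v (nearLiminfIndex n v) := by
  filter_upwards [eventually_apply_nearLiminfIndex_add u a,
    eventually_apply_nearLiminfIndex_add v b] with n hu hv
  rw [← hu, ← hv, huv, funext huv]

theorem IsEnumeratedCBER.hyperfinite_of_tail_eq {X : Type*} [MeasurableSpace X]
    [MeasurableSpace.CountablySeparated X] {E : X → X → Prop} (hE : IsEnumeratedCBER E)
    {u : ℕ → X → X} (hu : ∀ j, Measurable (u j)) (huE : ∀ j x, E x (u j x))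
    (htail : ∀ x y, E x y → ∃ a b, ∀ j, u (j + a) x = u (j + b) y) : Hyperfinite E := by
  obtain ⟨φ, hφ, hφi⟩ := exists_measurable_injective_unitInterval X
  let k : ℕ → X → ℕ := fun n x => nearLiminfIndex n fun j => φ (u j x)
  have hk : ∀ n, Measurable (k n) := fun n =>
    (measurable_nearLiminfIndex n).comp (measurable_pi_lambda _ fun j => hφ.comp (hu j))
  refine hE.hyperfinite_of_eventually_eq (t := fun n x => u (k n x) x) (fun n => ?_)
    (fun n x => huE _ x) fun x y hxy => ?_
  · exact (measurable_from_prod_countable_right (f := fun p : ℕ × X => u p.1 p.2) hu).comp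
      ((hk n).prodMk measurable_id)
  · obtain ⟨a, b, hab⟩ := htail x y hxy
    filter_upwards [eventually_apply_nearLiminfIndex_eq (u := fun j => φ (u j x))
      (v := fun j => φ (u j y)) fun j => congrArg φ (hab j)] with n hn
    exact hφi hn

end Markers

theorem eqvGen_iterate_iff {α : Type*} (f : α → α) (x y : α) :
    Relation.EqvGen (fun x y => ∃ m, y = f^[m] x) x y ↔ ∃ a b, f^[a] x = f^[b] y := by
  constructor
  · intro h
    induction h with
    | rel x y h =>
      obtain ⟨m, rfl⟩ := h
      exact ⟨m, 0, rfl⟩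
    | refl x => exact ⟨0, 0, rfl⟩
    | symm x y _ ih =>
      obtain ⟨a, b, h⟩ := ih
      exact ⟨b, a, h.symm⟩
    | trans x y z _ _ ihxy ihyz =>
      obtain ⟨a, b, hxy⟩ := ihxy
      obtain ⟨a', b', hyz⟩ := ihyz
      refine ⟨a' + a, b + b', ?_⟩
      rw [iterate_add_apply, hxy, ← iterate_add_apply, add_comm, iterate_add_apply, hyz,
        iterate_add_apply]
  · rintro ⟨a, b, h⟩
    exact .trans _ _ _ (.rel _ _ ⟨a, rfl⟩) (h ▸ .symm _ _ (.rel _ _ ⟨b, rfl⟩))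

section Geodesics

variable {V : Type*} {T : SimpleGraph V}

theorem tailRel_iff (v w : Geo T) :
    tailRel T v w ↔ ∃ a b, (geoShift T)^[a] v = (geoShift T)^[b] w :=
  eqvGen_iterate_iff (geoShift T) v w

theorem equivalence_tailRel : Equivalence (tailRel T) :=
  Relation.EqvGen.is_equivalence _

theorem iterate_geoShift_apply (v : Geo T) (a n : ℕ) : ((geoShift T)^[a] v).1 n = v.1 (n + a) := by
  induction a generalizing v with
  | zero => rfl
  | succ _ ih => exact ih (geoShift T v)

theorem tailRel_iterate_geoShift (v : Geo T) (a : ℕ) : tailRel T v ((geoShift T)^[a] v) :=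
  (tailRel_iff v _).2 ⟨a, 0, rfl⟩

theorem exists_isPath_support_eq_map_range (v : Geo T) (n : ℕ) :
    ∃ p : T.Walk (v.1 0) (v.1 n), p.IsPath ∧ p.support = (List.range (n + 1)).map v.1 := by
  obtain ⟨p, hp⟩ : ∃ p : T.Walk (v.1 0) (v.1 n), p.support = (List.range (n + 1)).map v.1 := by
    induction n with
    | zero => exact ⟨.nil, rfl⟩
    | succ n ih =>
      obtain ⟨p, hp⟩ := ih
      exact ⟨p.concat (v.2.2 n), by
        rw [SimpleGraph.Walk.support_concat, hp, List.range_succ (n := n + 1), List.map_append,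
          List.map_singleton]⟩
  exact ⟨p, p.isPath_def.2 (hp ▸ List.nodup_range.map v.2.1), hp⟩

theorem geo_apply_eq_of_le (hT : T.IsAcyclic) {v w : Geo T} (hzero : v.1 0 = w.1 0) {m n : ℕ}
    (hmn : v.1 m = w.1 n) {i : ℕ} (hi : i ≤ m) : v.1 i = w.1 i := by
  obtain ⟨p, hp, hps⟩ := exists_isPath_support_eq_map_range v m
  obtain ⟨q, hq, hqs⟩ := exists_isPath_support_eq_map_range w n
  have hpq : p.copy hzero hmn = q := congrArg Subtype.val <|
    (hT.subsingleton_path _ _).elim ⟨p.copy hzero hmn, (p.isPath_copy hzero hmn).2 hp⟩ ⟨q, hq⟩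
  have hsupp : (List.range (m + 1)).map v.1 = (List.range (n + 1)).map w.1 := by
    rw [← hps, ← hqs, ← hpq, SimpleGraph.Walk.support_copy]
  obtain rfl : m = n := by simpa using congrArg List.length hsupp
  exact List.map_inj_left.1 hsupp i (List.mem_range.2 (Nat.lt_succ_of_le hi))

theorem eq_of_tailRel_of_apply_zero_eq (hT : T.IsAcyclic) {v w : Geo T} (hvw : tailRel T v w)
    (hzero : v.1 0 = w.1 0) : v = w := by
  obtain ⟨a, b, hab⟩ := (tailRel_iff v w).1 hvw
  have htail : ∀ j, v.1 (j + a) = w.1 (j + b) := fun j => by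
    rw [← iterate_geoShift_apply, hab, iterate_geoShift_apply]
  exact Subtype.ext <| funext fun j => geo_apply_eq_of_le hT hzero (htail j) (Nat.le_add_right j a)

theorem natCases_mem_geo {c : V} {v : Geo T} (hadj : T.Adj c (v.1 0)) (hc : ∀ n, v.1 n ≠ c) :
    (fun n => n.casesOn c v.1) ∈ Geo T := by
  refine ⟨fun m n h => ?_, fun n => ?_⟩
  · cases m <;> cases n
    · rfl
    · exact absurd h.symm (hc _)
    · exact absurd h (hc _)
    · exact congrArg _ (v.2.1 h)
  · cases n
    · exact hadj
    · exact v.2.2 _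

open Classical in
/-- The geodesic `(c, v 0, v 1, …)`; the junk value is `v` when this sequence is not a geodesic. -/
noncomputable def geoCons (c : V) (v : Geo T) : Geo T :=
  if h : T.Adj c (v.1 0) ∧ ∀ n, v.1 n ≠ c then ⟨fun n => n.casesOn c v.1, natCases_mem_geo h.1 h.2⟩
  else v

theorem geoCons_geoShift (v : Geo T) : geoCons (v.1 0) (geoShift T v) = v := by
  have h : T.Adj (v.1 0) ((geoShift T v).1 0) ∧ ∀ n, (geoShift T v).1 n ≠ v.1 0 :=
    ⟨v.2.2 0, fun n => v.2.1.ne n.succ_ne_zero⟩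
  rw [geoCons, dif_pos h]
  exact Subtype.ext <| funext fun n => by cases n <;> rfl

theorem tailRel_geoCons (c : V) (v : Geo T) : tailRel T v (geoCons c v) := by
  by_cases h : T.Adj c (v.1 0) ∧ ∀ n, v.1 n ≠ c
  · rw [geoCons, dif_pos h]
    exact (tailRel_iff _ _).2 ⟨0, 1, rfl⟩
  · rw [geoCons, dif_neg h]
    exact equivalence_tailRel.refl v

theorem exists_foldr_geoCons_iterate_geoShift (w : Geo T) (b : ℕ) :
    ∃ q : List V, q.foldr geoCons ((geoShift T)^[b] w) = w := by
  induction b generalizing w with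
  | zero => exact ⟨[], rfl⟩
  | succ b ih =>
    obtain ⟨q, hq⟩ := ih (geoShift T w)
    exact ⟨w.1 0 :: q, by rw [iterate_succ_apply, List.foldr_cons, hq, geoCons_geoShift]⟩

theorem tailRel_foldr_geoCons (q : List V) (v : Geo T) : tailRel T v (q.foldr geoCons v) := by
  induction q with
  | nil => exact equivalence_tailRel.refl v
  | cons c q ih => exact equivalence_tailRel.trans ih (tailRel_geoCons c _)

theorem tailRel_iff_exists_foldr_geoCons (v w : Geo T) :
    tailRel T v w ↔ ∃ i : List V × ℕ, i.1.foldr geoCons ((geoShift T)^[i.2] v) = w := by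
  constructor
  · intro h
    obtain ⟨a, b, hab⟩ := (tailRel_iff v w).1 h
    obtain ⟨q, hq⟩ := exists_foldr_geoCons_iterate_geoShift w b
    exact ⟨(q, a), by rw [hab, hq]⟩
  · rintro ⟨i, rfl⟩
    exact equivalence_tailRel.trans (tailRel_iterate_geoShift v i.2) (tailRel_foldr_geoCons i.1 _)

variable [MeasurableSpace V]

theorem measurable_geo_apply (n : ℕ) : Measurable fun v : Geo T => v.1 n :=
  (measurable_pi_apply n).comp measurable_subtype_coe

theorem measurable_geo_iff {Y : Type*} [MeasurableSpace Y] {f : Y → Geo T} :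
    Measurable f ↔ ∀ n, Measurable fun y => (f y).1 n :=
  ⟨fun hf n => (measurable_geo_apply n).comp hf, fun hf => (measurable_pi_lambda _ hf).subtype_mk⟩

theorem measurable_iterate_geoShift (a : ℕ) : Measurable (geoShift T)^[a] :=
  (measurable_geo_iff.2 fun n => measurable_geo_apply (n + 1)).iterate a

variable [DiscreteMeasurableSpace V]

theorem measurable_geoCons (c : V) : Measurable (geoCons c : Geo T → Geo T) := by
  classical
  have hcond : MeasurableSet {v : Geo T | T.Adj c (v.1 0) ∧ ∀ n, v.1 n ≠ c} := by
    have hadj : MeasurableSet {v : Geo T | T.Adj c (v.1 0)} :=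
      measurable_geo_apply 0 (.of_discrete (s := {x | T.Adj c x}))
    have hne : MeasurableSet {v : Geo T | ∀ n, v.1 n ≠ c} := by
      simp only [Set.ofPred_forall]
      exact .iInter fun n => (measurable_geo_apply n (measurableSet_singleton c)).compl
    exact hadj.inter hne
  have happly : ∀ n (v : Geo T), (geoCons c v).1 n =
      if T.Adj c (v.1 0) ∧ ∀ n, v.1 n ≠ c then n.casesOn c v.1 else v.1 n := fun n v => by
    rw [geoCons]
    split_ifs <;> rfl
  refine measurable_geo_iff.2 fun n => ?_
  simp only [happly]
  refine Measurable.ite hcond ?_ (measurable_geo_apply n)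
  cases n with
  | zero => exact measurable_const
  | succ n => exact measurable_geo_apply n

variable [Countable V]

theorem isEnumeratedCBER_tailRel : IsEnumeratedCBER (tailRel T) := by
  refine .of_countable equivalence_tailRel (fun i => ?_) tailRel_iff_exists_foldr_geoCons
  have hfoldr : ∀ q : List V, Measurable fun v : Geo T => q.foldr geoCons v := fun q => by
    induction q with
    | nil => exact measurable_id
    | cons c q ih => exact (measurable_geoCons c).comp ih
  exact (hfoldr i.1).comp (measurable_iterate_geoShift i.2)

theorem smoothRel_tailRel (hT : T.IsAcyclic) : SmoothRel (tailRel T) :=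
  isEnumeratedCBER_tailRel.smoothRel_of_iUnion_eq_univ (A := fun c => {v | v.1 0 = c})
    (fun c => measurable_geo_apply 0 (measurableSet_singleton c))
    (Set.iUnion_eq_univ_iff.2 fun v => ⟨v.1 0, rfl⟩)
    fun _ _ hv _ hw hvw => eq_of_tailRel_of_apply_zero_eq hT hvw (Eq.trans hv (Eq.symm hw))

end Geodesics

section Actions

variable {V : Type*} {T : SimpleGraph V} {G : Type*} [Group G] [MulAction G V]

/-- The end of the geodesic `v`, as a point of the Gromov boundary. -/
def bdryPoint (v : Geo T) : Bdry T := Quotient.mk (tailSetoid T) v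

theorem bdryPoint_eq_iff {v w : Geo T} : bdryPoint v = bdryPoint w ↔ tailRel T v w :=
  Quotient.eq (r := tailSetoid T)

theorem bdryRel_bdryPoint_iff (hact : IsGraphAction T G) (v w : Geo T) :
    bdryRel hact (bdryPoint v) (bdryPoint w) ↔
      ∃ a b, geoRel hact ((geoShift T)^[a] v) ((geoShift T)^[b] w) := by
  have hsmul : ∀ g, bdrySmul hact g (bdryPoint v) = bdryPoint w ↔
      ∃ a b, geoSmul hact g ((geoShift T)^[a] v) = (geoShift T)^[b] w := fun g => by
    rw [show bdrySmul hact g (bdryPoint v) = bdryPoint (geoSmul hact g v) from rfl,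
      bdryPoint_eq_iff, tailRel_iff]
    simp only [iterate_geoShift_geoSmul]
  simp only [bdryRel, geoRel, hsmul]
  exact ⟨fun ⟨g, a, b, h⟩ => ⟨a, b, g, h⟩, fun ⟨a, b, g, h⟩ => ⟨g, a, b, h⟩⟩

theorem geoRel_iterate_geoShift (hact : IsGraphAction T G) {v w : Geo T} (h : geoRel hact v w)
    (j : ℕ) : geoRel hact ((geoShift T)^[j] v) ((geoShift T)^[j] w) := by
  obtain ⟨g, rfl⟩ := h
  exact ⟨g, (iterate_geoShift_geoSmul hact g j v).symm⟩

variable [MeasurableSpace V]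

theorem measurable_bdryPoint : Measurable (bdryPoint : Geo T → Bdry T) :=
  measurable_quotient_mk''

variable [DiscreteMeasurableSpace V]

theorem measurable_geoSmul (hact : IsGraphAction T G) (g : G) : Measurable (geoSmul hact g) :=
  measurable_geo_iff.2 fun n =>
    (Measurable.of_discrete (f := fun x : V => g • x)).comp (measurable_geo_apply n)

theorem measurable_bdrySmul (hact : IsGraphAction T G) (g : G) : Measurable (bdrySmul hact g) :=
  measurable_from_quotient.2 (measurable_bdryPoint.comp (measurable_geoSmul hact g))

theorem exists_measurable_section_bdryPoint [Countable V] (hT : T.IsAcyclic) :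
    ∃ ρ : Bdry T → Geo T, Measurable ρ ∧ ∀ x, bdryPoint (ρ x) = x :=
  isEnumeratedCBER_tailRel.exists_measurable_section (r := tailSetoid T) (smoothRel_tailRel hT)

variable [Countable G]

theorem isEnumeratedCBER_geoRel (hact : IsGraphAction T G) : IsEnumeratedCBER (geoRel hact) :=
  .of_group_action (measurable_geoSmul hact)
    (fun v => Subtype.ext <| funext fun n => one_smul G (v.1 n))
    (fun g h v => Subtype.ext <| funext fun n => mul_smul g h (v.1 n))

theorem isEnumeratedCBER_bdryRel (hact : IsGraphAction T G) : IsEnumeratedCBER (bdryRel hact) :=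
  .of_group_action (measurable_bdrySmul hact)
    (Quotient.ind fun v => congrArg bdryPoint <|
      Subtype.ext <| funext fun n => one_smul G (v.1 n))
    (fun g h => Quotient.ind fun v => congrArg bdryPoint <|
      Subtype.ext <| funext fun n => mul_smul g h (v.1 n))

variable [Countable V]

theorem hyperfinite_bdryRel_of_smoothRel_geoRel (hT : T.IsAcyclic) (hact : IsGraphAction T G)
    (hsmooth : SmoothRel (geoRel hact)) : Hyperfinite (bdryRel hact) := by
  obtain ⟨ρ, hρ, hρx⟩ := exists_measurable_section_bdryPoint hT
  obtain ⟨s, hs, hrel, hinv⟩ := (isEnumeratedCBER_geoRel hact).exists_selector hsmooth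
  have : MeasurableSpace.CountablySeparated (Bdry T) :=
    countablySeparated_of_measurable_injective hρ (LeftInverse.injective hρx)
  refine (isEnumeratedCBER_bdryRel hact).hyperfinite_of_tail_eq
    (u := fun j x => bdryPoint (s ((geoShift T)^[j] (ρ x)))) (fun j => ?_) (fun j x => ?_)
    fun x y hxy => ?_
  · exact measurable_bdryPoint.comp (hs.comp ((measurable_iterate_geoShift j).comp hρ))
  · nth_rw 1 [← hρx x]
    exact (bdryRel_bdryPoint_iff hact _ _).2 ⟨j, 0, hrel _⟩
  · rw [← hρx x, ← hρx y] at hxy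
    obtain ⟨a, b, hab⟩ := (bdryRel_bdryPoint_iff hact _ _).1 hxy
    refine ⟨a, b, fun j => congrArg bdryPoint (hinv _ _ ?_)⟩
    rw [iterate_add_apply, iterate_add_apply]
    exact geoRel_iterate_geoShift hact hab j

end Actions

section Stabilizers

variable {V : Type*} {T : SimpleGraph V} {G : Type*} [Group G] [MulAction G V]

theorem eq_of_geoRel_of_initStab_eq (hact : IsGraphAction T G) {v w : Geo T}
    (hvw : geoRel hact v w) {n : ℕ} (hstab : initStab G v.1 n = ptwiseStab G v.1)
    (hinit : ∀ k ≤ n, v.1 k = w.1 k) : v = w := by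
  obtain ⟨g, rfl⟩ := hvw
  have hg : g ∈ initStab G v.1 n := fun k hk => (hinit k hk).symm
  have hgfix : g ∈ ptwiseStab G v.1 := hstab ▸ hg
  exact Subtype.ext <| funext fun k => (hgfix k).symm

variable [Countable G] [MeasurableSpace V] [DiscreteMeasurableSpace V]

theorem measurableSet_initStab_eq_ptwiseStab (n : ℕ) :
    MeasurableSet {v : Geo T | initStab G v.1 n = ptwiseStab G v.1} := by
  have hfix : ∀ (g : G) k, MeasurableSet {v : Geo T | g • v.1 k = v.1 k} := fun g k =>
    measurable_geo_apply k (.of_discrete (s := {x | g • x = x}))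
  have hinit : ∀ g : G, MeasurableSet {v : Geo T | g ∈ initStab G v.1 n} := fun g => by
    change MeasurableSet {v : Geo T | ∀ k ≤ n, g • v.1 k = v.1 k}
    simp only [Set.ofPred_forall]
    exact .iInter fun k => .iInter fun _ => hfix g k
  have hptwise : ∀ g : G, MeasurableSet {v : Geo T | g ∈ ptwiseStab G v.1} := fun g => by
    change MeasurableSet {v : Geo T | ∀ k, g • v.1 k = v.1 k}
    simp only [Set.ofPred_forall]
    exact .iInter fun k => hfix g k
  simp only [SetLike.ext_iff, Set.ofPred_forall]
  exact .iInter fun g => (hinit g).iff (hptwise g)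

theorem smoothRel_geoRel [Countable V] (hact : IsGraphAction T G)
    (hstab : ∀ v : Geo T, ∃ n : ℕ, initStab G v.1 n = ptwiseStab G v.1) :
    SmoothRel (geoRel hact) := by
  refine (isEnumeratedCBER_geoRel hact).smoothRel_of_iUnion_eq_univ
    (A := fun σ : Σ n, Fin (n + 1) → V =>
      {v | initStab G v.1 σ.1 = ptwiseStab G v.1 ∧ ∀ i : Fin (σ.1 + 1), v.1 i = σ.2 i})
    (fun σ => ?_) (Set.iUnion_eq_univ_iff.2 fun v => ?_) fun σ v hv w hw hvw => ?_
  · have hinit : MeasurableSet {v : Geo T | ∀ i : Fin (σ.1 + 1), v.1 i = σ.2 i} := by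
      simp only [Set.ofPred_forall]
      exact .iInter fun i => measurable_geo_apply i (measurableSet_singleton (σ.2 i))
    exact (measurableSet_initStab_eq_ptwiseStab σ.1).inter hinit
  · obtain ⟨n, hn⟩ := hstab v
    exact ⟨⟨n, fun i => v.1 i⟩, hn, fun _ => rfl⟩
  · refine eq_of_geoRel_of_initStab_eq hact hvw hv.1 fun k hk => ?_
    exact (hv.2 ⟨k, Nat.lt_succ_of_le hk⟩).trans (hw.2 ⟨k, Nat.lt_succ_of_le hk⟩).symm

end Stabilizers

theorem boundary_action_hyperfinite_of_stabilized_initial_segments_general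
    {V : Type*} [Countable V] [MeasurableSpace V] [DiscreteMeasurableSpace V]
    (T : SimpleGraph V) (hT : T.IsAcyclic)
    {G : Type*} [Group G] [Countable G] [MulAction G V]
    (hact : IsGraphAction T G)
    (hstab : ∀ v : Geo T, ∃ n : ℕ, initStab G v.1 n = ptwiseStab G v.1) :
    Hyperfinite (bdryRel hact) :=
  hyperfinite_bdryRel_of_smoothRel_geoRel hT hact (smoothRel_geoRel hact hstab)

/-! ### STATEMENT 0 -/

theorem boundary_action_hyperfinite_of_stabilized_initial_segments
    {V : Type*} [Countable V] [MeasurableSpace V] [DiscreteMeasurableSpace V]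
    (T : SimpleGraph V) (hT : T.IsTree)
    {G : Type*} [Group G] [Countable G] [MulAction G V]
    (hact : IsGraphAction T G)
    (hstab : ∀ v : Geo T, ∃ n : ℕ, initStab G v.1 n = ptwiseStab G v.1) :
    Hyperfinite (bdryRel hact) :=
  boundary_action_hyperfinite_of_stabilized_initial_segments_general T hT.isAcyclic hact hstab
end

section
/- Let M and N be countable monoids, and let M × N act on a standard Borel space X by a countable-to-one Borel action such that the orbit equivalence relation E_N^X of the N-action is smooth. Then E_{M×N}^X is Borel bireducible with the orbit equivalence relation E_M^{X/N} of the induced action of M on the quotient space X/N. -/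
open MeasureTheory Function Filter

/-! ### STATEMENT 2 -/

section Stmt2

variable (M N : Type*) {X : Type*} [Monoid M] [Monoid N] [MulAction (M × N) X]

/-- The orbit equivalence relation of the `N`-part of the action of `M × N`. -/
def nPartRel : X → X → Prop :=
  Relation.EqvGen fun x y => ∃ n : N, y = ((1 : M), n) • x

def nPartSetoid : Setoid X :=
  ⟨nPartRel M N, Relation.EqvGen.is_equivalence _⟩

/-- The quotient space `X/N`. -/
abbrev QuotByN (M N X : Type*) [Monoid M] [Monoid N] [MulAction (M × N) X] : Type _ :=
  Quotient (nPartSetoid M N (X := X))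

lemma nPartRel_smul (m : M) {x y : X} (h : nPartRel M N x y) :
    nPartRel M N (((m, (1 : N)) : M × N) • x) (((m, (1 : N)) : M × N) • y) := by
  induction h with
  | rel a b hab =>
      obtain ⟨n, rfl⟩ := hab
      refine Relation.EqvGen.rel _ _ ⟨n, ?_⟩
      rw [smul_smul, smul_smul, Prod.mk_mul_mk, Prod.mk_mul_mk, one_mul, mul_one,
        one_mul, mul_one]
  | refl a => exact Relation.EqvGen.refl _
  | symm a b _ ih => exact Relation.EqvGen.symm _ _ ih
  | trans a b c _ _ ih1 ih2 => exact Relation.EqvGen.trans _ _ _ ih1 ih2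

/-- The induced action of `m : M` on the quotient `X/N`. -/
def mSmulQuot (m : M) : QuotByN M N X → QuotByN M N X :=
  Quotient.map (fun x => ((m, (1 : N)) : M × N) • x) (fun _ _ h => nPartRel_smul M N m h)

/-- The orbit equivalence relation `E_M^{X/N}` of the induced action of `M` on `X/N`. -/
def mQuotRel : QuotByN M N X → QuotByN M N X → Prop :=
  Relation.EqvGen fun a b => ∃ m : M, b = mSmulQuot M N m a

end Stmt2

/-!
A Borel transversal of `E_N^X` picks a point from each `N`-class, and so gives a section
`σ : X/N → X` of the quotient map `π`. Since `E_{M×N}^X` is the pullback of `E_M^{X/N}` along `π`,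
the two relations are bireducible through `π` and `σ` as soon as `σ` is Borel. To see that it is,
observe that `E_N^X` is analytic, being generated by countably many Borel graphs. The graph of the
selector `σ ∘ π` is therefore analytic as well, and a function with analytic graph is Borel by
Lusin separation.
-/

lemma reflTransGen_iff_exists_iterate_comp {α : Type*} {r : α → α → Prop} {x y : α} :
    Relation.ReflTransGen r x y ↔ ∃ k : ℕ, (Relation.Comp r)^[k] Eq x y := by
  constructor
  · intro h
    induction h using Relation.ReflTransGen.head_induction_on with
    | refl => exact ⟨0, rfl⟩
    | @head a b hab _ ih =>
      obtain ⟨k, hk⟩ := ih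
      exact ⟨k + 1, by rw [iterate_succ_apply']; exact ⟨b, hab, hk⟩⟩
  · rintro ⟨k, hk⟩
    induction k generalizing x with
    | zero => exact hk ▸ .refl
    | succ k ih =>
      rw [iterate_succ_apply'] at hk
      obtain ⟨b, hxb, hby⟩ := hk
      exact (ih hby).head hxb

lemma eqvGen_iff_eqvGen_of_surjective {X Y : Type*} {r : X → X → Prop} {s : Y → Y → Prop}
    {π : X → Y} (hπ : Surjective π) (hker : ∀ x x', π x = π x' → Relation.EqvGen r x x')
    (hrs : ∀ x x', r x x' → Relation.EqvGen s (π x) (π x'))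
    (hsr : ∀ x y, s (π x) y → ∃ x', π x' = y ∧ Relation.EqvGen r x x') (x x' : X) :
    Relation.EqvGen r x x' ↔ Relation.EqvGen s (π x) (π x') := by
  constructor
  · exact fun h => Setoid.eqvGen_le (s := (Relation.EqvGen.setoid s).comap π) hrs h
  · obtain ⟨σ, hσ⟩ := hπ.hasRightInverse
    have lift_step (y y' : Y) (h : s y y') : Relation.EqvGen r (σ y) (σ y') := by
      obtain ⟨z, hz, hr⟩ := hsr (σ y) y' (by rwa [hσ])
      exact hr.trans _ _ _ (hker _ _ (by rw [hz, hσ]))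
    intro h
    have lifted : Relation.EqvGen r (σ (π x)) (σ (π x')) :=
      Setoid.eqvGen_le (s := (Relation.EqvGen.setoid r).comap σ) lift_step h
    exact (hker _ _ (hσ _).symm).trans _ _ _ (lifted.trans _ _ _ (hker _ _ (hσ _)))

section AnalyticRel

variable {X Y Z : Type*} [TopologicalSpace X] [TopologicalSpace Y] [TopologicalSpace Z]

lemma analyticSet_inter [T2Space X] {A B : Set X} (hA : AnalyticSet A) (hB : AnalyticSet B) :
    AnalyticSet (A ∩ B) := by
  rw [Set.inter_eq_iInter]
  exact AnalyticSet.iInter (Bool.rec hB hA)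

lemma analyticSet_union {A B : Set X} (hA : AnalyticSet A) (hB : AnalyticSet B) :
    AnalyticSet (A ∪ B) := by
  rw [Set.union_eq_iUnion]
  exact AnalyticSet.iUnion (Bool.rec hB hA)

/-- An analytic (`Σ¹₁`) relation, encoded as a predicate whose set of pairs is analytic in the
product. Unlike the Borel relations, these are closed under composition, so that an orbit
equivalence relation inherits analyticity from the relation generating it. -/
def AnalyticRel (r : X → Y → Prop) : Prop :=
  AnalyticSet {p : X × Y | r p.1 p.2}

lemma analyticRel_exists_eq [PolishSpace X] [MeasurableSpace X] [BorelSpace X]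
    [PolishSpace Y] [MeasurableSpace Y] [BorelSpace Y] {ι : Type*} [Countable ι]
    {f : ι → X → Y} (hf : ∀ i, Measurable (f i)) :
    AnalyticRel fun x y => ∃ i, y = f i x := by
  rw [AnalyticRel, Set.ofPred_exists]
  exact AnalyticSet.iUnion fun i =>
    (measurableSet_eq_fun measurable_snd ((hf i).comp measurable_fst)).analyticSet

lemma analyticRel_eq [PolishSpace X] : AnalyticRel (Eq : X → X → Prop) :=
  isClosed_diagonal.analyticSet

namespace AnalyticRel

lemma comp [PolishSpace X] [PolishSpace Y] [PolishSpace Z] {r : X → Y → Prop} {s : Y → Z → Prop}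
    (hr : AnalyticRel r) (hs : AnalyticRel s) : AnalyticRel (Relation.Comp r s) := by
  have image_eq : {p : X × Z | Relation.Comp r s p.1 p.2} =
      (fun t : X × Y × Z => (t.1, t.2.2)) '' {t | r t.1 t.2.1 ∧ s t.2.1 t.2.2} := by
    ext ⟨x, z⟩
    simp [Relation.Comp]
  rw [AnalyticRel, image_eq]
  have left_analytic : AnalyticSet {t : X × Y × Z | r t.1 t.2.1} :=
    AnalyticSet.preimage hr (f := fun t : X × Y × Z => (t.1, t.2.1)) (by fun_prop)
  have right_analytic : AnalyticSet {t : X × Y × Z | s t.2.1 t.2.2} :=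
    AnalyticSet.preimage hs continuous_snd
  exact (analyticSet_inter left_analytic right_analytic).image_of_continuous (by fun_prop)

variable [PolishSpace X] {r : X → X → Prop}

lemma symmGen (hr : AnalyticRel r) : AnalyticRel (Relation.SymmGen r) :=
  analyticSet_union hr (AnalyticSet.preimage hr continuous_swap)

lemma reflTransGen (hr : AnalyticRel r) : AnalyticRel (Relation.ReflTransGen r) := by
  have iterate_analytic (k : ℕ) : AnalyticRel ((Relation.Comp r)^[k] Eq) := by
    induction k with
    | zero => exact analyticRel_eq
    | succ k ih => rw [iterate_succ_apply']; exact hr.comp ih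
  simp only [AnalyticRel, reflTransGen_iff_exists_iterate_comp, Set.ofPred_exists]
  exact AnalyticSet.iUnion iterate_analytic

lemma eqvGen (hr : AnalyticRel r) : AnalyticRel (Relation.EqvGen r) := by
  rw [← Relation.EqvGen.reflTransGen_symmGen]
  exact hr.symmGen.reflTransGen

end AnalyticRel

lemma measurable_of_analyticRel_graph [PolishSpace X] [MeasurableSpace X]
    [OpensMeasurableSpace X] [PolishSpace Y] [MeasurableSpace Y] [BorelSpace Y] {f : X → Y}
    (hf : AnalyticRel fun x y => f x = y) : Measurable f := by
  have preimage_analytic {A : Set Y} (hA : MeasurableSet A) : AnalyticSet (f ⁻¹' A) := by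
    have image_eq : f ⁻¹' A = Prod.fst '' ({p : X × Y | f p.1 = p.2} ∩ Prod.snd ⁻¹' A) := by
      ext x
      simp
    rw [image_eq]
    exact (analyticSet_inter hf (hA.analyticSet.preimage continuous_snd)).image_of_continuous
      continuous_fst
  exact fun A hA => (preimage_analytic hA).measurableSet_of_compl (preimage_analytic hA.compl)

end AnalyticRel

section Transversal

variable {X : Type*} {E : X → X → Prop} {B : Set X}

namespace IsTransversal

/-- The selector of a transversal `B` of `E`: the function sending `x` to the unique point of `B`
that is `E`-related to `x`. It turns a transversal into a section of the quotient map. -/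
noncomputable def selector (hB : IsTransversal E B) (x : X) : X :=
  (hB x).choose

lemma selector_eq_iff (hB : IsTransversal E B) {x y : X} :
    hB.selector x = y ↔ y ∈ B ∧ E x y :=
  ⟨fun h => h ▸ (hB x).choose_spec.1, fun h => ((hB x).choose_spec.2 y h).symm⟩

lemma rel_selector (hB : IsTransversal E B) (x : X) : E x (hB.selector x) :=
  (hB.selector_eq_iff.mp rfl).2

lemma selector_eq_selector {S : Setoid X} (hB : IsTransversal S B) {x y : X} (h : S x y) :
    hB.selector x = hB.selector y :=
  have ⟨mem, rel⟩ := hB.selector_eq_iff.mp (rfl : hB.selector y = _)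
  hB.selector_eq_iff.mpr ⟨mem, S.trans h rel⟩

lemma measurable_selector [TopologicalSpace X] [PolishSpace X] [MeasurableSpace X] [BorelSpace X]
    (hB : IsTransversal E B) (hBm : MeasurableSet B) (hE : AnalyticRel E) :
    Measurable hB.selector := by
  apply measurable_of_analyticRel_graph
  simp only [AnalyticRel, hB.selector_eq_iff]
  exact analyticSet_inter (hBm.analyticSet.preimage continuous_snd) hE

end IsTransversal

lemma SmoothRel.exists_measurable_rightInverse_mk [TopologicalSpace X] [PolishSpace X]
    [MeasurableSpace X] [BorelSpace X] {S : Setoid X} (hsmooth : SmoothRel S)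
    (hS : AnalyticRel S) :
    ∃ σ : Quotient S → X, Measurable σ ∧ RightInverse σ (Quotient.mk S) := by
  obtain ⟨B, hBm, hB⟩ := hsmooth
  refine ⟨Quotient.lift hB.selector fun _ _ => hB.selector_eq_selector,
    measurable_from_quotient.mpr (hB.measurable_selector hBm hS), ?_⟩
  rintro ⟨x⟩
  exact Quotient.sound (S.symm (hB.rel_selector x))

end Transversal

lemma borelBireducible_of_measurable_rightInverse {X Y : Type*} [MeasurableSpace X]
    [MeasurableSpace Y] {E : X → X → Prop} {F : Y → Y → Prop} {π : X → Y} {σ : Y → X}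
    (hπ : Measurable π) (hσ : Measurable σ) (hσπ : RightInverse σ π)
    (hEF : ∀ x x', E x x' ↔ F (π x) (π x')) : BorelBireducible E F :=
  ⟨⟨π, hπ, hEF⟩, ⟨σ, hσ, fun y y' => by rw [hEF, hσπ y, hσπ y']⟩⟩

section ProductAction

variable {M N X : Type*} [Monoid M] [Monoid N] [MulAction (M × N) X]

lemma monOrbitRel_of_nPartRel {x y : X} (h : nPartRel M N x y) : monOrbitRel (M × N) x y :=
  Relation.EqvGen.mono (fun _ _ ⟨n, hn⟩ => ⟨(1, n), hn⟩) _ _ h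

lemma mk_prod_smul (m : M) (n : N) (x : X) :
    Quotient.mk (nPartSetoid M N) ((m, n) • x) =
      mSmulQuot M N m (Quotient.mk (nPartSetoid M N) x) := by
  have factor : (m, n) • x = ((1 : M), n) • (m, (1 : N)) • x := by
    rw [smul_smul, Prod.mk_mul_mk, one_mul, mul_one]
  exact Quotient.sound (.symm _ _ (.rel _ _ ⟨n, factor⟩))

lemma monOrbitRel_iff_mQuotRel_mk (x y : X) :
    monOrbitRel (M × N) x y ↔
      mQuotRel M N (Quotient.mk (nPartSetoid M N) x) (Quotient.mk (nPartSetoid M N) y) := by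
  refine eqvGen_iff_eqvGen_of_surjective Quotient.mk_surjective ?_ ?_ ?_ x y
  · exact fun _ _ h => monOrbitRel_of_nPartRel (Quotient.exact h)
  · rintro x _ ⟨⟨m, n⟩, rfl⟩
    exact .rel _ _ ⟨m, mk_prod_smul m n x⟩
  · rintro x _ ⟨m, rfl⟩
    exact ⟨(m, 1) • x, mk_prod_smul m 1 x, .rel _ _ ⟨(m, 1), rfl⟩⟩

theorem orbit_rel_bireducible_with_quotient_general [Countable N] [MeasurableSpace X]
    [StandardBorelSpace X] (hBorel : ∀ n : N, Measurable fun x : X => ((1 : M), n) • x)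
    (hsmooth : SmoothRel (nPartRel M N (X := X))) :
    BorelBireducible (monOrbitRel (M × N) (X := X)) (mQuotRel M N (X := X)) := by
  let := upgradeStandardBorel X
  have nPart_analytic : AnalyticRel (nPartRel M N (X := X)) := (analyticRel_exists_eq hBorel).eqvGen
  obtain ⟨σ, hσ, hσπ⟩ :=
    SmoothRel.exists_measurable_rightInverse_mk (S := nPartSetoid M N) hsmooth nPart_analytic
  exact borelBireducible_of_measurable_rightInverse measurable_quotient_mk'' hσ hσπ
    monOrbitRel_iff_mQuotRel_mk

end ProductAction

theorem orbit_rel_bireducible_with_quotient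
    {M N X : Type*} [Monoid M] [Monoid N] [Countable M] [Countable N]
    [MeasurableSpace X] [StandardBorelSpace X] [MulAction (M × N) X]
    (hBorel : ∀ p : M × N, Measurable fun x : X => p • x)
    (hcto : ∀ (p : M × N) (x : X), {y : X | p • y = x}.Countable)
    (hsmooth : SmoothRel (nPartRel M N (X := X))) :
    BorelBireducible (monOrbitRel (M × N) (X := X)) (mQuotRel M N (X := X)) := by
  exact orbit_rel_bireducible_with_quotient_general (fun n => hBorel (1, n)) hsmooth
end
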